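/- Let e ∈ {1,2} and let r be a positive integer with r ≡ e+1 (mod 2). Let V be an F-vector space of dimension r+3 and Q a nondegenerate quadratic form on V of Witt defect e. Let S be a spread of Q and let W be a hyperplane of V such that the restriction of Q to W is a nondegenerate quadratic form of Witt defect e−1. Then at most q+1 members of S are contained in W. -/

import Mathlib

open Module Submodule

section Defs

variable {F : Type*} [Field F] {V : Type*} [AddCommGroup V] [Module F V]

/-- A subspace is totally singular if the quadratic form vanishes on it. -/
def IsTotallySingular (Q : QuadraticForm F V) (W : Submodule F V) : Prop :=
  ∀ x ∈ W, Q x = 0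

/-- The Witt index: maximal dimension of a totally singular subspace. -/
noncomputable def wittIndex (Q : QuadraticForm F V) : ℕ :=
  sSup {n : ℕ | ∃ W : Submodule F V, IsTotallySingular Q W ∧ Module.finrank F ↥W = n}

/-- Nondegeneracy: the only singular vector orthogonal to everything is `0`. -/
def QuadNondeg (Q : QuadraticForm F V) : Prop :=
  ∀ v : V, Q v = 0 → (∀ x : V, QuadraticMap.polar Q v x = 0) → v = 0

/-- A generator: totally singular subspace of dimension the Witt index. -/
def IsGenerator (Q : QuadraticForm F V) (G : Submodule F V) : Prop :=
  IsTotallySingular Q G ∧ Module.finrank F ↥G = wittIndex Q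

/-- A spread of `Q`. -/
def IsSpread (Q : QuadraticForm F V) (S : Set (Submodule F V)) : Prop :=
  (∀ G ∈ S, IsGenerator Q G) ∧
  (∀ G ∈ S, ∀ G' ∈ S, G ≠ G' → G ⊓ G' = ⊥) ∧
  (∀ v : V, Q v = 0 → ∃ G ∈ S, v ∈ G)

/-- The perp of a vector with respect to the polar form of `Q`. -/
def vecPerp (Q : QuadraticForm F V) (u : V) : Submodule F V :=
  LinearMap.ker (QuadraticMap.polarBilin Q u)

/-- The perp of a subspace with respect to the polar form of `Q`. -/
def subPerp (Q : QuadraticForm F V) (G : Submodule F V) : Submodule F V :=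
  ⨅ g ∈ G, vecPerp Q g

/-- Hyperbolic (e = 0), parabolic (e = 1) or elliptic (e = 2) affine vector space
partition for `(U, H, Q, Pgen)`. -/
def IsAvsp [Fintype F] (e r : ℕ) {U : Type*} [AddCommGroup U] [Module F U]
    (H : Submodule F U) (Q : QuadraticForm F ↥H) (Pgen : Submodule F ↥H)
    (P : Set (Submodule F U)) : Prop :=
  P.ncard = Fintype.card F ^ ((r + e + 1) / 2) ∧
  (∀ S ∈ P, Module.finrank F ↥S = (r + 3 - e) / 2 ∧ ¬ S ≤ H) ∧
  (∀ L : Submodule F U, Module.finrank F ↥L = 1 → ¬ L ≤ H → ∃! S, S ∈ P ∧ L ≤ S) ∧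
  (∀ S ∈ P, IsGenerator Q (S.comap H.subtype) ∧ S.comap H.subtype ⊓ Pgen = ⊥) ∧
  (∀ S ∈ P, ∀ T ∈ P, S ≠ T → S.comap H.subtype ≠ T.comap H.subtype) ∧
  (∀ S ∈ P, ∀ T ∈ P, S ≠ T → Module.finrank F ↥(S ⊓ T) ≤ 1) ∧
  (∀ S ∈ P, ∀ T ∈ P, S ≠ T →
    Module.finrank F ↥(S.comap H.subtype ⊓ T.comap H.subtype) = 1 →
      QuadNondeg (Q.comp ((S ⊔ T).comap H.subtype).subtype) ∧
      Module.finrank F ↥((S ⊔ T).comap H.subtype) =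
        2 * wittIndex (Q.comp ((S ⊔ T).comap H.subtype).subtype))

end Defs

/-!
Write `q = |F|` and let `Q` have Witt index `w` and Witt defect `e`. The perp `P` of a generator `G`
has dimension `w + e`, and its singular vectors are those of `G`; outside `P` all values of `Q`
occur equally often, because the functional `B(v, ·)` on `G` is nonzero there and
`Q (v + g) = Q v + B(v, g)` for `g ∈ G`. This determines the number of singular vectors, and hence
the size of a spread. The members of the spread partition the nonzero singular vectors of the
hyperplane `W`, whose number is known in the same way; since the members contained in `W` contribute
`q ^ w - 1` vectors each and all others `q ^ (w - 1) - 1`, exactly `q ^ (e - 1) + 1` members lie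
in `W`.
-/

theorem finsum_mem_eq_ncard_nsmul {ι M : Type*} [AddCommMonoid M] {s : Set ι} (hs : s.Finite)
    {f : ι → M} {c : M} (hf : ∀ i ∈ s, f i = c) : ∑ᶠ i ∈ s, f i = s.ncard • c := by
  rw [finsum_mem_eq_finite_toFinset_sum f hs, Set.ncard_eq_toFinset_card s hs]
  exact Finset.sum_eq_card_nsmul fun i hi => hf i (hs.mem_toFinset.1 hi)

section General

variable {F : Type*} [Field F] {V : Type*} [AddCommGroup V] [Module F V]
  {Q : QuadraticForm F V} {S : Set (Submodule F V)} {G W : Submodule F V}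

theorem mem_subPerp {v : V} : v ∈ subPerp Q G ↔ ∀ g ∈ G, QuadraticMap.polar Q g v = 0 := by
  simp only [subPerp, vecPerp, mem_iInf, LinearMap.mem_ker, QuadraticMap.polarBilin_apply_apply]

theorem subPerp_eq_orthogonal : subPerp Q G = LinearMap.BilinForm.orthogonal Q.polarBilin G := by
  ext v
  exact mem_subPerp

theorem ncard_singular_restrict (Q : QuadraticForm F V) (W : Submodule F V) :
    {w | Q.comp W.subtype w = 0}.ncard = {v ∈ W | Q v = 0}.ncard :=
  Nat.card_congr (Equiv.subtypeSubtypeEquivSubtypeInter (· ∈ W) fun v => Q v = 0)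

theorem IsTotallySingular.map_add_eq_add_polar (hG : IsTotallySingular Q G) (v : V) {g : V}
    (hg : g ∈ G) : Q (v + g) = Q v + QuadraticMap.polar Q v g := by
  rw [QuadraticMap.map_add Q, hG g hg, add_zero]

theorem IsTotallySingular.polar_eq_zero (hG : IsTotallySingular Q G) {g h : V} (hg : g ∈ G)
    (hh : h ∈ G) : QuadraticMap.polar Q g h = 0 := by
  rw [QuadraticMap.polar, hG _ (G.add_mem hg hh), hG g hg, hG h hh, sub_zero, sub_zero]

theorem IsTotallySingular.le_subPerp (hG : IsTotallySingular Q G) : G ≤ subPerp Q G :=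
  fun _ hv => mem_subPerp.2 fun _ hg => hG.polar_eq_zero hg hv

theorem IsTotallySingular.sup_span_singleton (hG : IsTotallySingular Q G) {v : V}
    (hv : Q v = 0) (hvG : v ∈ subPerp Q G) : IsTotallySingular Q (G ⊔ F ∙ v) := by
  intro x hx
  obtain ⟨g, hg, y, hy, rfl⟩ := mem_sup.1 hx
  obtain ⟨c, rfl⟩ := mem_span_singleton.1 hy
  rw [add_comm, hG.map_add_eq_add_polar _ hg, QuadraticMap.map_smul, hv,
    QuadraticMap.polar_smul_left, QuadraticMap.polar_comm, mem_subPerp.1 hvG g hg, smul_zero,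
    smul_zero, add_zero]

theorem IsTotallySingular.finrank_add_finrank_subPerp [FiniteDimensional F V]
    (hG : IsTotallySingular Q G) (hQ : QuadNondeg Q) :
    finrank F G + finrank F (subPerp Q G) = finrank F V := by
  have hrefl : LinearMap.BilinForm.IsRefl Q.polarBilin := fun x y h =>
    (QuadraticMap.polar_comm Q y x).trans h
  have hrad : G ⊓ LinearMap.BilinForm.orthogonal Q.polarBilin ⊤ = ⊥ :=
    (Submodule.eq_bot_iff _).2 fun g hg => hQ g (hG g hg.1) fun x =>
      hrefl x g (hg.2 x mem_top)
  rw [subPerp_eq_orthogonal, LinearMap.BilinForm.finrank_add_finrank_orthogonal hrefl, hrad,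
    finrank_bot, add_zero]

/-- `t v` is chosen according to the functional `polar Q v` on `G`, which does not change when an
element of `G` is added to `v`. -/
theorem IsTotallySingular.exists_polar_eq_one (hG : IsTotallySingular Q G) :
    ∃ t : V → V, ∀ v ∉ subPerp Q G,
      t v ∈ G ∧ QuadraticMap.polar Q v (t v) = 1 ∧ ∀ g ∈ G, t (v + g) = t v := by
  let φ : V →ₗ[F] Dual F G := G.subtype.dualMap ∘ₗ Q.polarBilin
  have hφ_add : ∀ (v : V), ∀ g ∈ G, φ (v + g) = φ v := fun v g hg => by
    ext h
    simpa [φ] using hG.polar_eq_zero hg h.2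
  have hφ_ne : ∀ v ∉ subPerp Q G, φ v ≠ 0 := fun v hv h =>
    hv <| mem_subPerp.2 fun g hg =>
      (QuadraticMap.polar_comm Q g v).trans (LinearMap.congr_fun h ⟨g, hg⟩)
  have hsurj : ∀ ψ : Dual F G, ∃ g : G, ψ ≠ 0 → ψ g = 1 := fun ψ => by
    by_cases hψ : ψ = 0
    · exact ⟨0, fun h => absurd hψ h⟩
    · exact (LinearMap.surjective hψ 1).imp fun _ hg _ => hg
  choose s hs using hsurj
  exact ⟨fun v => s (φ v), fun v hv => ⟨coe_mem _, hs _ (hφ_ne v hv), fun g hg =>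
    congrArg (fun ψ => (s ψ : V)) (hφ_add v g hg)⟩⟩

/-- Adding `c • t v` to `v`, with `t` as in `exists_polar_eq_one`, adds `c` to `Q v`; so off the
perp of `G` all values of `Q` are taken equally often. -/
theorem IsTotallySingular.card_mul_ncard_singular_notMem_subPerp (hG : IsTotallySingular Q G) :
    Nat.card F * {v | v ∉ subPerp Q G ∧ Q v = 0}.ncard = {v | v ∉ subPerp Q G}.ncard := by
  obtain ⟨t, ht⟩ := hG.exists_polar_eq_one
  have hmem : ∀ (c : F), ∀ v ∉ subPerp Q G, c • t v ∈ G := fun c v hv => G.smul_mem c (ht v hv).1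
  have hperp : ∀ (c : F), ∀ v ∉ subPerp Q G, v + c • t v ∉ subPerp Q G := fun c v hv h =>
    hv ((add_mem_cancel_right (hG.le_subPerp (hmem c v hv))).1 h)
  have ht_add : ∀ (c : F), ∀ v ∉ subPerp Q G, t (v + c • t v) = t v := fun c v hv =>
    (ht v hv).2.2 _ (hmem c v hv)
  have hQ_add : ∀ (c : F), ∀ v ∉ subPerp Q G, Q (v + c • t v) = Q v + c := fun c v hv => by
    rw [hG.map_add_eq_add_polar v (hmem c v hv), QuadraticMap.polar_smul_right, (ht v hv).2.1,
      smul_eq_mul, mul_one]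
  let translate : F × {v | v ∉ subPerp Q G ∧ Q v = 0} ≃ {v | v ∉ subPerp Q G} :=
    { toFun := fun ⟨c, v, hv⟩ => ⟨v + c • t v, hperp c v hv.1⟩
      invFun := fun ⟨v, hv⟩ => (Q v, ⟨v + -Q v • t v, hperp _ v hv, by
        rw [hQ_add _ v hv, add_neg_cancel]⟩)
      left_inv := fun ⟨c, v, hv, hQv⟩ => by simp [hQ_add c v hv, ht_add c v hv, hQv]
      right_inv := fun ⟨v, hv⟩ => Subtype.ext <| by
        dsimp only
        rw [ht_add _ v hv, neg_smul, neg_add_cancel_right] }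
  simpa only [Nat.card_prod, Nat.card_coe_set_eq] using Nat.card_congr translate

theorem finrank_inf_add_one_of_not_le [FiniteDimensional F V]
    (hW : finrank F W + 1 = finrank F V) (hGW : ¬ G ≤ W) :
    finrank F ↥(G ⊓ W) + 1 = finrank F G := by
  have hlt : finrank F W < finrank F ↥(G ⊔ W) := finrank_lt_finrank_of_lt (right_lt_sup.2 hGW)
  have hle : finrank F ↥(G ⊔ W) ≤ finrank F V := finrank_le _
  have := finrank_sup_add_finrank_inf_eq G W
  omega

section WittIndex

variable [FiniteDimensional F V]

theorem bddAbove_finrank_isTotallySingular (Q : QuadraticForm F V) :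
    BddAbove {n : ℕ | ∃ W : Submodule F V, IsTotallySingular Q W ∧ finrank F W = n} := by
  refine ⟨finrank F V, ?_⟩
  rintro n ⟨W, -, rfl⟩
  exact W.finrank_le

theorem IsTotallySingular.finrank_le_wittIndex (hG : IsTotallySingular Q G) :
    finrank F G ≤ wittIndex Q :=
  le_csSup (bddAbove_finrank_isTotallySingular Q) ⟨G, hG, rfl⟩

theorem exists_isGenerator (Q : QuadraticForm F V) : ∃ G : Submodule F V, IsGenerator Q G := by
  have hbot : IsTotallySingular Q ⊥ := fun x hx => by
    rw [(mem_bot F).1 hx, QuadraticMap.map_zero]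
  exact Nat.sSup_mem (s := {n | ∃ W : Submodule F V, IsTotallySingular Q W ∧ finrank F W = n})
    ⟨_, ⊥, hbot, rfl⟩ (bddAbove_finrank_isTotallySingular Q)

theorem IsGenerator.mem_iff (hG : IsGenerator Q G) {v : V} :
    v ∈ G ↔ v ∈ subPerp Q G ∧ Q v = 0 := by
  refine ⟨fun hv => ⟨hG.1.le_subPerp hv, hG.1 v hv⟩, fun ⟨hvG, hv⟩ => ?_⟩
  have hle : finrank F ↥(G ⊔ F ∙ v) ≤ finrank F G :=
    hG.2 ▸ (hG.1.sup_span_singleton hv hvG).finrank_le_wittIndex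
  rw [eq_of_le_of_finrank_le le_sup_left hle]
  exact mem_sup_right (mem_span_singleton_self v)

end WittIndex

section Counting

variable [FiniteDimensional F V]

theorem ncard_submodule (U : Submodule F V) : (U : Set V).ncard = Nat.card F ^ finrank F U :=
  (Nat.card_coe_set_eq _).symm.trans (natCard_eq_pow_finrank (K := F) (V := U))

variable [Finite F]

theorem QuadNondeg.card_mul_ncard_singular (hQ : QuadNondeg Q) {e : ℕ}
    (he : finrank F V = 2 * wittIndex Q + e) :
    Nat.card F * {v | Q v = 0}.ncard + Nat.card F ^ (wittIndex Q + e) =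
      Nat.card F ^ (wittIndex Q + 1) + Nat.card F ^ (2 * wittIndex Q + e) := by
  have : Finite V := Module.finite_of_finite F
  obtain ⟨G, hG⟩ := exists_isGenerator Q
  have hperp : finrank F (subPerp Q G) = wittIndex Q + e := by
    have := hG.1.finrank_add_finrank_subPerp hQ
    have := hG.2
    omega
  have hsingular : (G : Set V).ncard + {v | v ∉ subPerp Q G ∧ Q v = 0}.ncard =
      {v | Q v = 0}.ncard := by
    have hGeq : (G : Set V) = {v | Q v = 0} ∩ subPerp Q G := by
      ext v
      exact hG.mem_iff.trans and_comm
    have hdiff : {v | v ∉ subPerp Q G ∧ Q v = 0} = {v | Q v = 0} \ subPerp Q G := by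
      ext v
      exact and_comm
    rw [hGeq, hdiff, Set.ncard_inter_add_ncard_sdiff_eq_ncard]
  have hcompl : (subPerp Q G : Set V).ncard + {v | v ∉ subPerp Q G}.ncard =
      Nat.card F ^ (2 * wittIndex Q + e) := by
    rw [← he, ← natCard_eq_pow_finrank (K := F) (V := V)]
    exact Set.ncard_add_ncard_compl _
  rw [ncard_submodule, hG.2] at hsingular
  rw [ncard_submodule, hperp, ← hG.1.card_mul_ncard_singular_notMem_subPerp] at hcompl
  rw [← hsingular, ← hcompl]
  ring

theorem IsSpread.ncard_singular_add_ncard (hS : IsSpread Q S) (U : Submodule F V) :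
    {v ∈ U | Q v = 0}.ncard + S.ncard = ∑ᶠ G ∈ S, Nat.card F ^ finrank F ↥(G ⊓ U) + 1 := by
  have : Finite V := Module.finite_of_finite F
  have hcover : {v ∈ U | Q v = 0} \ {0} = ⋃ G ∈ S, ((G ⊓ U : Submodule F V) : Set V) \ {0} := by
    ext v
    simp only [Set.mem_sdiff, Set.mem_ofPred_eq, Set.mem_singleton_iff, Set.mem_iUnion, coe_inf,
      Set.mem_inter_iff, SetLike.mem_coe, exists_prop]
    constructor
    · rintro ⟨⟨hvU, hv⟩, hv0⟩
      obtain ⟨G, hG, hvG⟩ := hS.2.2 v hv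
      exact ⟨G, hG, ⟨hvG, hvU⟩, hv0⟩
    · rintro ⟨G, hG, ⟨hvG, hvU⟩, hv0⟩
      exact ⟨⟨hvU, (hS.1 G hG).1 v hvG⟩, hv0⟩
  have hdisj : S.PairwiseDisjoint fun G => ((G ⊓ U : Submodule F V) : Set V) \ {0} := by
    intro G hG G' hG' hne
    refine Set.disjoint_left.2 fun v hv hv' => hv.2 ((mem_bot F).1 ?_)
    exact hS.2.1 G hG G' hG' hne ▸ ⟨hv.1.1, hv'.1.1⟩
  have hterm : ∀ G : Submodule F V,
      (((G ⊓ U : Submodule F V) : Set V) \ {0}).ncard + 1 = Nat.card F ^ finrank F ↥(G ⊓ U) :=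
    fun G => by rw [Set.ncard_sdiff_singleton_add_one (zero_mem (G ⊓ U)), ncard_submodule]
  rw [← finsum_mem_congr rfl fun G _ => hterm G, finsum_mem_add_distrib S.toFinite,
    ← S.toFinite.ncard_biUnion (fun _ _ => Set.toFinite _) hdisj, ← hcover, finsum_one,
    ← Set.ncard_sdiff_singleton_add_one (a := (0 : V)) (s := {v ∈ U | Q v = 0}) (by simp)]
  ring

theorem IsSpread.card_mul_ncard (hS : IsSpread Q S) (hQ : QuadNondeg Q) {e : ℕ}
    (he : finrank F V = 2 * wittIndex Q + e) (hw : 0 < wittIndex Q) :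
    Nat.card F * S.ncard = Nat.card F ^ (wittIndex Q + e) + Nat.card F := by
  have : Finite V := Module.finite_of_finite F
  have hsum := hS.ncard_singular_add_ncard ⊤
  have hterm : ∀ G ∈ S, Nat.card F ^ finrank F ↥(G ⊓ ⊤) = Nat.card F ^ wittIndex Q :=
    fun G hG => by rw [inf_top_eq, (hS.1 G hG).2]
  simp only [mem_top, true_and] at hsum
  rw [finsum_mem_eq_ncard_nsmul S.toFinite hterm, smul_eq_mul] at hsum
  have hN := hQ.card_mul_ncard_singular he
  have hpos : (0 : ℤ) < Nat.card F ^ wittIndex Q - 1 :=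
    sub_pos.2 (mod_cast Nat.one_lt_pow hw.ne' Finite.one_lt_card)
  zify at hsum hN ⊢
  refine mul_right_cancel₀ hpos.ne' ?_
  linear_combination hN - (Nat.card F : ℤ) * hsum

theorem IsSpread.ncard_singular_hyperplane (hS : IsSpread Q S)
    (hW : finrank F W + 1 = finrank F V) {k : ℕ} (hk : wittIndex Q = k + 1) :
    {v ∈ W | Q v = 0}.ncard + S.ncard =
      {G ∈ S | G ≤ W}.ncard * Nat.card F ^ (k + 1) +
        {G ∈ S | ¬ G ≤ W}.ncard * Nat.card F ^ k + 1 := by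
  have : Finite V := Module.finite_of_finite F
  have hinside : ∀ G ∈ {G ∈ S | G ≤ W}, Nat.card F ^ finrank F ↥(G ⊓ W) =
      Nat.card F ^ (k + 1) := fun G hG => by
    rw [inf_eq_left.2 hG.2, (hS.1 G hG.1).2, hk]
  have houtside : ∀ G ∈ {G ∈ S | ¬ G ≤ W}, Nat.card F ^ finrank F ↥(G ⊓ W) =
      Nat.card F ^ k := fun G hG => by
    have hrank : finrank F ↥(G ⊓ W) + 1 = k + 1 := by
      rw [finrank_inf_add_one_of_not_le hW hG.2, (hS.1 G hG.1).2, hk]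
    rw [Nat.add_right_cancel hrank]
  rw [hS.ncard_singular_add_ncard W,
    ← finsum_mem_inter_add_sdiff {G | G ≤ W} S.toFinite]
  exact congrArg (· + 1) (congrArg₂ (· + ·)
    (finsum_mem_eq_ncard_nsmul (Set.toFinite _) hinside)
    (finsum_mem_eq_ncard_nsmul (Set.toFinite _) houtside))

end Counting

end General

theorem lemma_aux1_general {F : Type*} [Field F] [Finite F] {V : Type*} [AddCommGroup V]
    [Module F V] [FiniteDimensional F V] {Q : QuadraticForm F V} {S : Set (Submodule F V)}
    {W : Submodule F V} {d : ℕ} (hQ : QuadNondeg Q) (hV : finrank F V = 2 * wittIndex Q + (d + 1))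
    (hw : 0 < wittIndex Q) (hS : IsSpread Q S) (hQW : QuadNondeg (Q.comp W.subtype))
    (hW : finrank F W = 2 * wittIndex (Q.comp W.subtype) + d)
    (hdim : finrank F W + 1 = finrank F V) :
    {G ∈ S | G ≤ W}.ncard = Nat.card F ^ d + 1 := by
  obtain ⟨k, hk⟩ := Nat.exists_eq_add_one.2 hw
  have hkW : wittIndex (Q.comp W.subtype) = k + 1 := by omega
  have : Finite V := Module.finite_of_finite F
  have hsplit : {G ∈ S | G ≤ W}.ncard + {G ∈ S | ¬ G ≤ W}.ncard = S.ncard :=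
    Set.ncard_inter_add_ncard_sdiff_eq_ncard S {G | G ≤ W}
  have hspread := hS.card_mul_ncard hQ hV hw
  have hsum := hS.ncard_singular_hyperplane hdim hk
  have hN := hQW.card_mul_ncard_singular hW
  rw [hkW, ncard_singular_restrict] at hN
  rw [hk] at hspread
  have hq : (1 : ℤ) < Nat.card F := mod_cast Finite.one_lt_card
  zify at hspread hsum hN hsplit ⊢
  have hne : (Nat.card F : ℤ) ^ (k + 1) * (Nat.card F - 1) ≠ 0 :=
    mul_ne_zero (pow_ne_zero _ (by lia)) (by lia)
  refine mul_right_cancel₀ hne ?_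
  linear_combination hN + (1 - (Nat.card F : ℤ) ^ k) * hspread - (Nat.card F : ℤ) * hsum -
    (Nat.card F : ℤ) ^ (k + 1) * hsplit

theorem lemma_aux1 {F : Type*} [Field F] [Fintype F] (e r : ℕ)
    (he : e = 1 ∨ e = 2) (hr : 0 < r) (hmod : r % 2 = (e + 1) % 2)
    (V : Type*) [AddCommGroup V] [Module F V] [FiniteDimensional F V]
    (hdim : Module.finrank F V = r + 3)
    (Q : QuadraticForm F V) (hQnd : QuadNondeg Q)
    (hdef : Module.finrank F V = 2 * wittIndex Q + e)
    (S : Set (Submodule F V)) (hS : IsSpread Q S)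
    (W : Submodule F V) (hW : Module.finrank F ↥W = r + 2)
    (hWnd : QuadNondeg (Q.comp W.subtype))
    (hWdef : Module.finrank F ↥W = 2 * wittIndex (Q.comp W.subtype) + (e - 1)) :
    {G ∈ S | G ≤ W}.ncard ≤ Fintype.card F + 1 := by
  obtain rfl | rfl := he
  · exact (lemma_aux1_general (d := 0) hQnd hdef (by omega) hS hWnd hWdef (by omega)).trans_le
      (by simp [Nat.one_le_iff_ne_zero])
  · exact (lemma_aux1_general (d := 1) hQnd hdef (by omega) hS hWnd hWdef (by omega)).trans_le
      (by simp)
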